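/- arXiv:1111.2777 — 2 statements merged into one kernel-verified Lean document; each statement's English description precedes it below -/
import Mathlib

section
/- For a commutative Noetherian ring R, the global dimension of R equals the supremum over all maximal ideals m of the global dimensions of the localizations R_m, and for each maximal ideal m, gd(R_m) = pd_R(R/m). -/
/-!
STATEMENT 7: for a commutative Noetherian ring `R`, the global dimension of `R` is the
supremum over all maximal ideals `m` of the global dimensions of the localizations `R_m`
(expressed by: `gd(R) ≤ n ↔ ∀ m, gd(R_m) ≤ n`), and for each maximal ideal `m`,
`gd(R_m) = pd_R(R/m)` (expressed by: `gd(R_m) ≤ n ↔ pd_R(R/m) ≤ n`, for all `n`).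
-/

open CategoryTheory

/-- `M` has projective dimension `≤ n`. -/
def ProjDimLE (R : Type) [Ring R] (M : ModuleCat.{0} R) (n : ℕ) : Prop :=
  ∃ P : ProjectiveResolution M, ∀ i : ℕ, n < i → Limits.IsZero (P.complex.X i)

/-- `R` has global dimension `≤ n`: every `R`-module has projective dimension `≤ n`. -/
def GlobalDimLE (R : Type) [Ring R] (n : ℕ) : Prop :=
  ∀ M : ModuleCat.{0} R, ProjDimLE R M n

section aux
open Abelian
open scoped Pointwise

theorem aux_injdim (A : Type) [CommRing A] (n : ℕ) (N : ModuleCat.{0} A)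
    (h : ∀ I : Ideal A, Subsingleton (Ext (ModuleCat.of A (A ⧸ I)) N (n + 1))) :
    HasInjectiveDimensionLE N n := by
  induction n generalizing N with
  | zero =>
    simp only [HasInjectiveDimensionLE, zero_add, ← injective_iff_hasInjectiveDimensionLT_one]
    rw [← Module.injective_iff_injective_object, ← Module.Baer.iff_injective]
    intro I g
    let S : ShortComplex (ModuleCat.{0} A) :=
      ModuleCat.shortComplexOfCompEqZero I.subtype I.mkQ
        (LinearMap.exact_subtype_mkQ _).linearMap_comp_eq_zero
    have hS : S.ShortExact := ModuleCat.shortComplex_shortExact S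
      (LinearMap.exact_subtype_mkQ I) I.injective_subtype I.mkQ_surjective
    have hsub : Subsingleton (Ext S.X₃ N 1) := h I
    obtain ⟨x, hx⟩ := Ext.contravariant_sequence_exact₁ hS N
      (Ext.mk₀ (ModuleCat.ofHom g : S.X₁ ⟶ N)) (add_zero 1) (Subsingleton.elim _ _)
    obtain ⟨x, rfl⟩ := (Ext.mk₀_bijective _ _).2 x
    rw [Ext.mk₀_comp_mk₀, (Ext.mk₀_bijective _ _).1.eq_iff] at hx
    refine ⟨x.hom, fun y hy => ?_⟩
    exact congrArg (fun k => k.hom ⟨y, hy⟩) hx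
  | succ n ih =>
    let ⟨E, _, f, _⟩ := EnoughInjectives.presentation N
    have hS : (ShortComplex.mk _ _ (Limits.cokernel.condition f)).ShortExact :=
      { exact := ShortComplex.exact_cokernel f }
    refine (hS.hasInjectiveDimensionLT_X₃_iff n inferInstance).mp (ih _ fun I => ?_)
    refine subsingleton_of_forall_eq 0 fun x => ?_
    have := h I
    obtain ⟨y, rfl⟩ := Ext.covariant_sequence_exact₃ _ hS x rfl (Subsingleton.elim _ _)
    rw [Ext.eq_zero_of_injective y, Ext.zero_comp]

theorem aux_injdim_to_projdim (A : Type) [CommRing A] (n : ℕ)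
    (h : ∀ N : ModuleCat.{0} A, HasInjectiveDimensionLE N n) (M : ModuleCat.{0} A) :
    HasProjectiveDimensionLE M n := by
  refine HasProjectiveDimensionLT.mk fun i hi Y e => ?_
  have := h Y
  exact e.eq_zero_of_hasInjectiveDimensionLT (n + 1) hi

theorem aux_projdim_to_injdim (A : Type) [CommRing A] (n : ℕ)
    (h : ∀ N : ModuleCat.{0} A, HasProjectiveDimensionLE N n) (M : ModuleCat.{0} A) :
    HasInjectiveDimensionLE M n := by
  refine HasInjectiveDimensionLT.mk fun i hi Y e => ?_
  have := h Y
  exact e.eq_zero_of_hasProjectiveDimensionLT (n + 1) hi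

theorem aux_local (A : Type) [CommRing A] [IsNoetherianRing A] [IsLocalRing A] (n : ℕ)
    (h : ∀ (M : ModuleCat.{0} A) (f : A →ₗ[A] M), Function.Surjective f →
      LinearMap.ker f = IsLocalRing.maximalIdeal A → HasProjectiveDimensionLE M n) (I : Ideal A) :
    ∀ (M : ModuleCat.{0} A) (f : A →ₗ[A] M), Function.Surjective f →
      LinearMap.ker f = I → HasProjectiveDimensionLE M n := by
  induction I using IsNoetherian.induction with
  | hgt I ih =>
  intro M f hf hker
  by_cases hmax : I = IsLocalRing.maximalIdeal A
  · exact h M f hf (hker.trans hmax)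
  by_cases htop : I = ⊤
  · have : Subsingleton M := by
      refine subsingleton_of_forall_eq 0 fun y => ?_
      obtain ⟨x, rfl⟩ := hf y
      have : x ∈ LinearMap.ker f := by rw [hker, htop]; trivial
      simpa using this
    have := (ModuleCat.isZero_of_subsingleton M).hasProjectiveDimensionLT_zero
    exact hasProjectiveDimensionLT_of_ge M 0 (n + 1) (by simp)
  have hfin : Module.Finite A M := Module.Finite.of_surjective f hf
  have hmem : ∀ x, x ∈ I ↔ f x = 0 := fun x => by rw [← hker, LinearMap.mem_ker]
  have hq : ∀ (N : Submodule A M) (x : A), x ∉ I → f x ∈ N →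
      HasProjectiveDimensionLE (ModuleCat.of A (M ⧸ N)) n := by
    intro N x hx hxN
    refine ih (LinearMap.ker (N.mkQ ∘ₗ f)) ?_ (ModuleCat.of A (M ⧸ N)) (N.mkQ ∘ₗ f)
      (N.mkQ_surjective.comp hf) rfl
    refine lt_of_le_of_ne ?_ ?_
    · intro y hy
      simp [(hmem y).1 hy]
    · intro heq
      apply hx
      rw [heq]
      simpa using hxN
  by_cases hp : Ideal.IsPrime I
  · have hle : I ≤ IsLocalRing.maximalIdeal A := IsLocalRing.le_maximalIdeal htop
    obtain ⟨x, hxm, hxI⟩ := SetLike.exists_of_lt (lt_of_le_of_ne hle hmax)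
    have reg : IsSMulRegular M x := by
      rw [isSMulRegular_iff_right_eq_zero_of_smul]
      intro y hy
      obtain ⟨r, rfl⟩ := hf y
      rw [← map_smul, ← hmem, smul_eq_mul] at hy
      exact (hmem r).1 ((hp.mem_or_mem hy).resolve_left hxI)
    have key := ModuleCat.projectiveDimension_quotSMulTop_eq_succ_of_isSMulRegular M x reg hxm
    have hle2 := hq (x • ⊤) x hxI (by
      have := Submodule.smul_mem_pointwise_smul (f 1) x (⊤ : Submodule A M) trivial
      rwa [← map_smul, smul_eq_mul, mul_one] at this)
    rw [← projectiveDimension_le_iff] at hle2 ⊢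
    refine le_trans ?_ hle2
    refine le_trans ?_ key.ge
    exact le_add_of_nonneg_right (by simp)
  · rw [Ideal.isPrime_iff] at hp
    push Not at hp
    obtain ⟨a, b, hab, ha, hb⟩ := hp htop
    let g : M →ₗ[A] M := LinearMap.lsmul A M a
    let S : ShortComplex (ModuleCat.{0} A) :=
      ModuleCat.shortComplexOfCompEqZero (LinearMap.range g).subtype (LinearMap.range g).mkQ
        (LinearMap.exact_subtype_mkQ _).linearMap_comp_eq_zero
    have hS : S.ShortExact := ModuleCat.shortComplex_shortExact S
      (LinearMap.exact_subtype_mkQ _) (Submodule.injective_subtype _) (Submodule.mkQ_surjective _)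
    refine hS.hasProjectiveDimensionLT_X₂ (n + 1) ?_ ?_
    · refine ih (LinearMap.ker (g.rangeRestrict ∘ₗ f)) ?_ (ModuleCat.of A (LinearMap.range g))
        (g.rangeRestrict ∘ₗ f) (g.surjective_rangeRestrict.comp hf) rfl
      refine lt_of_le_of_ne ?_ ?_
      · intro y hy
        simp [(hmem y).1 hy]
      · intro heq
        apply hb
        rw [heq, LinearMap.mem_ker]
        ext
        have := (hmem _).1 hab
        rw [← smul_eq_mul, map_smul] at this
        exact this
    · exact hq (LinearMap.range g) a ha ⟨f 1, by
        simp only [g, LinearMap.lsmul_apply]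
        rw [← map_smul, smul_eq_mul, mul_one]⟩

theorem aux_local_global (A : Type) [CommRing A] [IsNoetherianRing A] [IsLocalRing A] (n : ℕ)
    (h : ∀ (M : ModuleCat.{0} A) (f : A →ₗ[A] M), Function.Surjective f →
      LinearMap.ker f = IsLocalRing.maximalIdeal A → HasProjectiveDimensionLE M n)
    (M : ModuleCat.{0} A) : HasProjectiveDimensionLE M n := by
  refine aux_injdim_to_projdim A n (fun N => aux_injdim A n N fun I => ?_) M
  have := aux_local A n h I (ModuleCat.of A (A ⧸ I)) I.mkQ I.mkQ_surjective I.ker_mkQ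
  exact HasProjectiveDimensionLT.subsingleton _ (n + 1) _ le_rfl _

theorem aux_resolution {R : Type} [CommRing R] {S : ShortComplex (ModuleCat.{0} R)}
    (hS : S.ShortExact) [Projective S.X₂] (Q : ProjectiveResolution S.X₁) :
    ∃ P : ProjectiveResolution S.X₃, ∀ i, P.complex.X (i + 1) = Q.complex.X i := by
  have := hS.mono_f
  have := hS.epi_g
  obtain ⟨p, hepi, hp0, hpex⟩ : ∃ p : Q.complex.X 0 ⟶ S.X₁, Epi p ∧
      ∃ h : Q.complex.d 1 0 ≫ p = 0, (ShortComplex.mk _ _ h).Exact :=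
    ⟨Q.π.f 0, inferInstanceAs (Epi (Q.π.f 0)), Q.complex_d_comp_π_f_zero, Q.exact₀⟩
  have w : Q.complex.d 1 0 ≫ p ≫ S.f = 0 := by
    rw [← Category.assoc, hp0, Limits.zero_comp]
  let C := ChainComplex.augment Q.complex (p ≫ S.f) w
  have hd : C.d 1 0 ≫ S.g = 0 := by
    change (p ≫ S.f) ≫ S.g = 0
    rw [Category.assoc, S.zero, Limits.comp_zero]
  have ex0 : (ShortComplex.mk (p ≫ S.f) S.g hd).Exact := by
    have h := (ShortComplex.ShortExact.moduleCat_exact_iff_function_exact _).1 hS.exact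
    rw [ShortComplex.ShortExact.moduleCat_exact_iff_function_exact]
    intro y
    rw [h y]
    have hsur := (ModuleCat.epi_iff_surjective (p)).1 hepi
    constructor
    · rintro ⟨x, rfl⟩
      obtain ⟨z, rfl⟩ := hsur x
      exact ⟨z, rfl⟩
    · rintro ⟨z, rfl⟩
      exact ⟨p z, rfl⟩
  have ex1 : (ShortComplex.mk (Q.complex.d 1 0) (p ≫ S.f) w).Exact := by
    have h := (ShortComplex.ShortExact.moduleCat_exact_iff_function_exact _).1 hpex
    rw [ShortComplex.ShortExact.moduleCat_exact_iff_function_exact]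
    intro y
    rw [← h y]
    have hinj := (ModuleCat.mono_iff_injective S.f).1 inferInstance
    constructor
    · intro hy
      exact hinj (hy.trans (map_zero S.f.hom).symm)
    · intro hy
      exact (congrArg S.f.hom hy).trans (map_zero S.f.hom)
  refine ⟨{ complex := C
            projective := fun n => by
              cases n with
              | zero => exact (inferInstance : Projective S.X₂)
              | succ n => exact (inferInstance : Projective (Q.complex.X n))
            π := (ChainComplex.toSingle₀Equiv _ _).symm ⟨S.g, hd⟩
            quasiIso := ⟨fun n => ?_⟩ }, fun i => rfl⟩
  rcases n with _ | n
  · rw [ChainComplex.quasiIsoAt₀_iff, ShortComplex.quasiIso_iff_of_zeros']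
    · have key : ((ChainComplex.toSingle₀Equiv C S.X₃).symm ⟨S.g, hd⟩).f 0 = S.g :=
        ChainComplex.toSingle₀Equiv_symm_apply_f_zero (C := C) (X := S.X₃) S.g hd
      refine (ShortComplex.exact_and_epi_g_iff_of_iso ?_).2 ⟨ex0, inferInstance⟩
      exact ShortComplex.isoMk (Iso.refl _) (Iso.refl _) (Iso.refl _)
          ((Category.id_comp _).trans (Category.comp_id _).symm)
        ((Category.id_comp _).trans (key.symm.trans (Category.comp_id _).symm))
    all_goals rfl
  · rw [quasiIsoAt_iff_exactAt']
    · rw [HomologicalComplex.exactAt_iff' _ (n + 1 + 1) (n + 1) n (by simp) (by simp)]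
      rcases n with _ | n
      · exact ex1
      · exact Q.exact_succ n
    · apply ChainComplex.exactAt_succ_single_obj

theorem projDimLE_iff {R : Type} [CommRing R] (M : ModuleCat.{0} R) (n : ℕ) :
    ProjDimLE R M n ↔ HasProjectiveDimensionLE M n := by
  constructor
  · rintro ⟨P, hP⟩
    refine HasProjectiveDimensionLT.mk fun i hi Y e => ?_
    obtain ⟨f, hf, rfl⟩ := P.extMk_surjective e (i + 1) rfl
    obtain rfl := (hP i (by omega)).eq_of_src f 0
    simp
  · intro h
    induction n generalizing M with
    | zero =>
      have := (projective_iff_hasProjectiveDimensionLE_zero M).2 h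
      refine ⟨ProjectiveResolution.self M, fun i hi => ?_⟩
      exact HomologicalComplex.isZero_single_obj_X _ _ _ _ (by omega)
    | succ n ih =>
      have hS := M.shortExact_projectiveShortComplex
      have hp : Projective M.projectiveShortComplex.X₂ := inferInstance
      obtain ⟨Q, hQ⟩ := ih _ ((hS.hasProjectiveDimensionLT_X₃_iff n hp).1 h)
      obtain ⟨P, hP⟩ := aux_resolution hS Q
      refine ⟨P, fun i hi => ?_⟩
      obtain ⟨i, rfl⟩ : ∃ j, i = j + 1 := ⟨i - 1, by omega⟩
      rw [hP]
      exact hQ i (by omega)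

theorem aux_restrict (R : Type) [CommRing R] (S : Submonoid R) (n : ℕ)
    (h : ∀ M : ModuleCat.{0} R, HasProjectiveDimensionLE M n)
    (M : ModuleCat.{0} (Localization S)) : HasProjectiveDimensionLE M n := by
  let : Module R M := Module.compHom M (algebraMap R (Localization S))
  have : IsScalarTower R (Localization S) M :=
    IsScalarTower.of_algebraMap_smul fun _ _ => rfl
  have := h (ModuleCat.of R M)
  have h1 := ModuleCat.localizedModule_hasProjectiveDimensionLE n S (ModuleCat.of R M)
  have h2 : IsLocalizedModule S (LinearMap.id : M →ₗ[R] M) :=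
    isLocalizedModule_id S M (Localization S)
  refine ModuleCat.hasProjectiveDimensionLE_of_linearEquiv
    (M := (ModuleCat.of R M).localizedModule S) (N := M) ?_ n
  exact LinearEquiv.extendScalarsOfIsLocalization S (Localization S)
    (IsLocalizedModule.linearEquiv S ((ModuleCat.of R M).localizedModuleMkLinearMap S)
      (LinearMap.id : M →ₗ[R] M))

theorem aux_residue (R : Type) [CommRing R] (m : MaximalSpectrum R)
    (N : ModuleCat.{0} R) (q : R →ₗ[R] N) (hq : Function.Surjective q)
    (hker : LinearMap.ker q = m.asIdeal) :
    ∃ f : Localization.AtPrime m.asIdeal →ₗ[Localization.AtPrime m.asIdeal]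
        N.localizedModule m.asIdeal.primeCompl,
      Function.Surjective f ∧
        LinearMap.ker f = IsLocalRing.maximalIdeal (Localization.AtPrime m.asIdeal) := by
  let S := m.asIdeal.primeCompl
  have hqm : ∀ r, r ∈ m.asIdeal ↔ q r = 0 := fun r => by rw [← hker, LinearMap.mem_ker]
  let f := IsLocalizedModule.mapExtendScalars S (Algebra.linearMap R (Localization.AtPrime m.asIdeal))
    (N.localizedModuleMkLinearMap S) (Localization.AtPrime m.asIdeal) q
  have hfa : ∀ r : R, f (algebraMap R _ r) = N.localizedModuleMkLinearMap S (q r) := fun r =>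
    IsLocalizedModule.map_apply S (Algebra.linearMap R (Localization.AtPrime m.asIdeal))
      (N.localizedModuleMkLinearMap S) q r
  refine ⟨f, IsLocalizedModule.map_surjective S
    (Algebra.linearMap R (Localization.AtPrime m.asIdeal))
    (N.localizedModuleMkLinearMap S) q hq, ?_⟩
  refine ((IsLocalRing.maximalIdeal.isMaximal _).eq_of_le ?_ ?_).symm
  · intro htop
    have h1 : (1 : Localization.AtPrime m.asIdeal) ∈ LinearMap.ker f := by rw [htop]; trivial
    rw [LinearMap.mem_ker, ← map_one (algebraMap R _), hfa,
      IsLocalizedModule.eq_zero_iff S] at h1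
    obtain ⟨s, hs⟩ := h1
    apply s.2
    have : q (s : R) = 0 := by
      rw [← mul_one (s : R), ← smul_eq_mul, map_smul]
      exact hs
    exact (hqm _).2 this
  · rw [← Localization.AtPrime.map_eq_maximalIdeal, Ideal.map_le_iff_le_comap]
    intro r hr
    change f (algebraMap R _ r) = 0
    rw [hfa, show q r = 0 from (hqm r).1 hr, map_zero]

theorem aux_other (R : Type) [CommRing R] (m m' : MaximalSpectrum R) (hne : m ≠ m')
    (N : ModuleCat.{0} R) (q : R →ₗ[R] N) (hq : Function.Surjective q)
    (hker : LinearMap.ker q = m.asIdeal) :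
    Subsingleton (N.localizedModule m'.asIdeal.primeCompl) := by
  have hnle : ¬ m.asIdeal ≤ m'.asIdeal := fun hle =>
    hne (MaximalSpectrum.ext (m.isMaximal.eq_of_le m'.isMaximal.ne_top hle))
  obtain ⟨s, hs, hs'⟩ := SetLike.not_le_iff_exists.1 hnle
  rw [IsLocalizedModule.subsingleton_iff m'.asIdeal.primeCompl
    (N.localizedModuleMkLinearMap m'.asIdeal.primeCompl)]
  intro x
  refine ⟨s, hs', ?_⟩
  obtain ⟨r, rfl⟩ := hq x
  rw [← map_smul, smul_eq_mul, ← LinearMap.mem_ker, hker]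
  exact m.asIdeal.mul_mem_right r hs

theorem globalDimLE_iff (R : Type) [CommRing R] (n : ℕ) :
    GlobalDimLE R n ↔ ∀ M : ModuleCat.{0} R, HasProjectiveDimensionLE M n :=
  forall_congr' fun M => projDimLE_iff M n

end aux

theorem globalDim_eq_sup_localizations
    (R : Type) [CommRing R] [IsNoetherianRing R] :
    (∀ n : ℕ, GlobalDimLE R n ↔
      ∀ m : MaximalSpectrum R, GlobalDimLE (Localization.AtPrime m.asIdeal) n) ∧
    (∀ (m : MaximalSpectrum R) (n : ℕ),
      GlobalDimLE (Localization.AtPrime m.asIdeal) n ↔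
        ProjDimLE R (ModuleCat.of R (R ⧸ m.asIdeal)) n) := by
  have hloc : ∀ m : MaximalSpectrum R,
      IsNoetherianRing (Localization.AtPrime m.asIdeal) := fun m =>
    IsLocalization.isNoetherianRing m.asIdeal.primeCompl _ inferInstance
  refine ⟨fun n => ⟨fun h m => ?_, fun h => ?_⟩, fun m n => ?_⟩
  · rw [globalDimLE_iff] at h ⊢
    exact aux_restrict R m.asIdeal.primeCompl n h
  · rw [globalDimLE_iff]
    refine aux_injdim_to_projdim R n fun N => ?_
    rw [ModuleCat.hasInjectiveDimensionLE_iff_forall_maximalSpectrum]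
    intro m
    exact aux_projdim_to_injdim _ n ((globalDimLE_iff _ n).1 (h m)) _
  · rw [globalDimLE_iff, projDimLE_iff]
    have hfin : Module.Finite R (ModuleCat.of R (R ⧸ m.asIdeal)) :=
      inferInstanceAs (Module.Finite R (R ⧸ m.asIdeal))
    rw [ModuleCat.hasProjectiveDimensionLE_iff_forall_maximalSpectrum]
    constructor
    · intro h m'
      by_cases hne : m = m'
      · subst hne
        exact h _
      · have := aux_other R m m' hne (ModuleCat.of R (R ⧸ m.asIdeal)) m.asIdeal.mkQ
          m.asIdeal.mkQ_surjective m.asIdeal.ker_mkQ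
        have := (ModuleCat.isZero_of_subsingleton ((ModuleCat.of R
          (R ⧸ m.asIdeal)).localizedModule m'.asIdeal.primeCompl)).hasProjectiveDimensionLT_zero
        exact hasProjectiveDimensionLT_of_ge _ 0 (n + 1) (by simp)
    · intro h
      refine aux_local_global _ n fun M g hg hgker => ?_
      obtain ⟨f, hf, hfker⟩ := aux_residue R m (ModuleCat.of R (R ⧸ m.asIdeal)) m.asIdeal.mkQ
        m.asIdeal.mkQ_surjective m.asIdeal.ker_mkQ
      have := h m
      refine ModuleCat.hasProjectiveDimensionLE_of_linearEquiv
        (M := (ModuleCat.of R (R ⧸ m.asIdeal)).localizedModule m.asIdeal.primeCompl) (N := M) ?_ n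
      exact (f.quotKerEquivOfSurjective hf).symm.trans
        ((Submodule.quotEquivOfEq _ _ (hfker.trans hgker.symm)).trans
          (g.quotKerEquivOfSurjective hg))
end

section
/- If R is a commutative Noetherian ring of finite global dimension, then R is regular, i.e., every localization of R at a prime ideal is a regular local ring. -/
/-!
STATEMENT 8: if `R` is a commutative Noetherian ring of finite global dimension, then `R`
is regular: every localization of `R` at a prime ideal is a regular local ring.
-/

open CategoryTheory

/-- A commutative Noetherian local ring is regular if the embedding dimension
`dim_{R/m} (m/m²)` equals the Krull dimension of `R`. -/
def IsRegularLocal (R : Type) [CommRing R] [IsLocalRing R] : Prop :=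
  (Module.finrank (IsLocalRing.ResidueField R) (IsLocalRing.CotangentSpace R) :
    WithBot (WithTop ℕ)) = ringKrullDim R

theorem ProjDimLE.hasPD {R : Type} [Ring R] {M : ModuleCat.{0} R} {n : ℕ} (h : ProjDimLE R M n) :
    HasProjectiveDimensionLE M n := by
  obtain ⟨P, hP⟩ := h
  refine HasProjectiveDimensionLT.mk fun i hi Y e ↦ ?_
  obtain ⟨f, hf, rfl⟩ := P.extMk_surjective e (i+1) rfl
  obtain rfl := (hP i hi).eq_of_src f 0
  exact P.extMk_zero _ _

theorem pd_atPrime {R : Type} [CommRing R] (p : Ideal R) [p.IsPrime] (n : ℕ)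
    (h : ∀ M : ModuleCat.{0} R, HasProjectiveDimensionLE M n)
    (N : Type) [AddCommGroup N] [Module (Localization.AtPrime p) N] :
    HasProjectiveDimensionLE (ModuleCat.of (Localization.AtPrime p) N) n := by
  let : Module R N := Module.compHom N (algebraMap R (Localization.AtPrime p))
  have : IsScalarTower R (Localization.AtPrime p) N := ⟨fun a b c ↦ by
    rw [Algebra.smul_def, mul_smul]; rfl⟩
  have := h (ModuleCat.of R N)
  have := ModuleCat.localizedModule_hasProjectiveDimensionLE n p.primeCompl (ModuleCat.of R N)
  have := isLocalizedModule_id p.primeCompl N (Localization.AtPrime p)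
  have := ModuleCat.localizedModule_isLocalizedModule (ModuleCat.of R N) p.primeCompl
  let e : (ModuleCat.of R N).localizedModule p.primeCompl ≃ₗ[R] N :=
    IsLocalizedModule.linearEquiv p.primeCompl
     ((ModuleCat.of R N).localizedModuleMkLinearMap p.primeCompl) (LinearMap.id : N →ₗ[R] N)
  exact ModuleCat.hasProjectiveDimensionLE_of_linearEquiv (N := ModuleCat.of (Localization.AtPrime p) N)
    (LinearEquiv.extendScalarsOfIsLocalization p.primeCompl (Localization.AtPrime p) e) n

open IsLocalRing

theorem exists_minimal_surj {A : Type} [CommRing A] [IsLocalRing A] (M : Type) [AddCommGroup M]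
    [Module A M] [Module.Finite A M] : ∃ (n : ℕ) (f : (Fin n → A) →ₗ[A] M),
    Function.Surjective f ∧ ∀ v, f v = 0 → ∀ i, v i ∈ maximalIdeal A := by
  classical
  have hex := Module.Finite.exists_fin' A M
  obtain ⟨f, hf⟩ := Nat.find_spec hex
  refine ⟨_, f, hf, fun v hv i ↦ ?_⟩
  by_contra hi
  obtain ⟨u, hu⟩ : IsUnit (v i) := by simpa using hi
  obtain ⟨k, hk⟩ : ∃ k, Nat.find hex = k + 1 := Nat.exists_eq_succ_of_ne_zero fun h0 ↦ by
    have := i.2; omega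
  refine Nat.find_min hex (m := k) (by omega) ?_
  generalize Nat.find hex = N at *
  subst hk
  -- g : Fin k → A, insert zero at i
  let g : (Fin k → A) →ₗ[A] (Fin (k+1) → A) := LinearMap.pi fun j ↦
    (i.insertNth (α := fun _ ↦ (Fin k → A) →ₗ[A] A) 0 (fun j ↦ LinearMap.proj j)) j
  refine ⟨f ∘ₗ g, fun m ↦ ?_⟩
  obtain ⟨w, rfl⟩ := hf m
  refine ⟨fun j ↦ (w - (w i * ↑u⁻¹) • v) (i.succAbove j), ?_⟩
  have : g (fun j ↦ (w - (w i * ↑u⁻¹) • v) (i.succAbove j)) = w - (w i * ↑u⁻¹) • v := by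
    ext j
    refine Fin.succAboveCases i ?_ ?_ j
    · simp [g, ← hu]
    · intro j; simp [g]
  rw [LinearMap.comp_apply, this, map_sub, map_smul, hv]; simp

theorem free_of_pd {A : Type} [CommRing A] [IsLocalRing A] [IsNoetherianRing A] (s : A)
    (hs : s ≠ 0) (hm : ∀ x ∈ maximalIdeal A, s * x = 0) (n : ℕ) (M : Type) [AddCommGroup M]
    [Module A M] [Module.Finite A M] [h : HasProjectiveDimensionLE (ModuleCat.of A M) n] :
    Module.Free A M := by
  induction n generalizing M with
  | zero =>
    rw [← projective_iff_hasProjectiveDimensionLE_zero, ← IsProjective.iff_projective] at h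
    exact Module.free_of_flat_of_isLocalRing
  | succ n ih =>
    obtain ⟨N, f, hf, hmin⟩ := exists_minimal_surj (A := A) M
    have hS := LinearMap.shortExact_shortComplexKer hf
    have hp : Projective f.shortComplexKer.X₂ := by
      rw [← IsProjective.iff_projective]; exact Module.Projective.of_basis (Pi.basisFun A (Fin N))
    have : HasProjectiveDimensionLE (ModuleCat.of A (LinearMap.ker f)) n :=
      (hS.hasProjectiveDimensionLT_X₃_iff n hp).mp h
    have := ih (LinearMap.ker f)
    have hb : LinearMap.ker f = ⊥ := by
      rw [← Submodule.subsingleton_iff_eq_bot]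
      by_contra! hnt
      apply hs
      have : s ∈ Module.annihilator A (LinearMap.ker f) := by
        rw [Module.mem_annihilator]
        rintro ⟨v, hv⟩
        ext i
        exact hm _ (hmin v hv i)
      rwa [Module.annihilator_eq_bot.mpr inferInstance] at this
    exact Module.Free.of_equiv (LinearEquiv.ofBijective f ⟨LinearMap.ker_eq_bot.mp hb, hf⟩)

theorem pd_step (B : Type) [CommRing B] (n : ℕ) (K P M : Type)
    [AddCommGroup K] [Module B K] [AddCommGroup P] [Module B P] [AddCommGroup M] [Module B M]
    (i : K →ₗ[B] P) (f : P →ₗ[B] M) (e1 : Function.Injective i) (e2 : Function.Exact i f)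
    (s2 : Function.Surjective f) [Module.Projective B P]
    (hpd : HasProjectiveDimensionLE (ModuleCat.of B K) n) :
    HasProjectiveDimensionLE (ModuleCat.of B M) (n + 1) := by
  let S : ShortComplex (ModuleCat.{0} B) :=
    ShortComplex.mk (ModuleCat.ofHom i) (ModuleCat.ofHom f)
     (by ext y; exact e2.apply_apply_eq_zero y)
  have hSS : S.ShortExact :=
    { exact := (ShortComplex.ShortExact.moduleCat_exact_iff_function_exact S).mpr e2
      mono_f := (ModuleCat.mono_iff_injective _).mpr e1
      epi_g := (ModuleCat.epi_iff_surjective _).mpr s2 }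
  refine (hSS.hasProjectiveDimensionLT_X₃_iff n ?_).mpr hpd
  rw [← IsProjective.iff_projective]
  assumption

theorem pd_quot_step (A : Type) [CommRing A] (x : A) (n : ℕ) (K P M : Type)
    [AddCommGroup K] [Module A K] [AddCommGroup P] [Module A P] [AddCommGroup M] [Module A M]
    (i : K →ₗ[A] P) (f : P →ₗ[A] M) (hi : Function.Injective i) (hex : Function.Exact i f)
    (hf : Function.Surjective f) (hM : IsSMulRegular M x) [Module.Projective A P]
    (hpd : HasProjectiveDimensionLE (ModuleCat.of (A ⧸ Ideal.span {x}) (QuotSMulTop x K)) n) :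
    HasProjectiveDimensionLE (ModuleCat.of (A ⧸ Ideal.span {x}) (QuotSMulTop x M)) (n + 1) := by
  have hsurj : Function.Surjective (algebraMap A (A ⧸ Ideal.span {x})) :=
    Ideal.Quotient.mk_surjective
  have e2 : Function.Exact (QuotSMulTop.map x i) (QuotSMulTop.map x f) :=
    QuotSMulTop.map_exact x hex hf
  have s2 := QuotSMulTop.map_surjective x hf
  have e1 : Function.Injective (QuotSMulTop.map x i) := by
    have h1 : Function.Exact (0 : PUnit →ₗ[A] K) i := by
      rw [LinearMap.exact_iff, LinearMap.range_zero, LinearMap.ker_eq_bot.mpr hi]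
    have := QuotSMulTop.map_first_exact_on_four_term_exact_of_isSMulRegular_last h1 hex hM
    rw [LinearMap.exact_iff, map_zero, LinearMap.range_zero] at this
    exact LinearMap.ker_eq_bot.mp this
  have : Module.Projective (A ⧸ Ideal.span {x}) (QuotSMulTop x P) :=
    Module.Projective.of_equiv ((QuotSMulTop.equivQuotTensor x P).extendScalarsOfSurjective
      hsurj).symm
  exact pd_step (A ⧸ Ideal.span {x}) n (QuotSMulTop x K) (QuotSMulTop x P) (QuotSMulTop x M)
    ((QuotSMulTop.map x i).extendScalarsOfSurjective hsurj)
    ((QuotSMulTop.map x f).extendScalarsOfSurjective hsurj) e1 e2 s2 hpd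

theorem pd_quot {A : Type} [CommRing A] (x : A) (hx : IsSMulRegular A x) (n : ℕ) (M : Type)
    [AddCommGroup M] [Module A M] (hM : IsSMulRegular M x)
    [h : HasProjectiveDimensionLE (ModuleCat.of A M) n] :
    HasProjectiveDimensionLE (ModuleCat.of (A ⧸ Ideal.span {x}) (QuotSMulTop x M)) n := by
  induction n generalizing M with
  | zero =>
    rw [← projective_iff_hasProjectiveDimensionLE_zero, ← IsProjective.iff_projective] at h ⊢
    exact Module.Projective.of_equiv ((QuotSMulTop.equivQuotTensor x M).extendScalarsOfSurjective
      Ideal.Quotient.mk_surjective).symm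
  | succ n ih =>
    obtain ⟨f, hf⟩ : ∃ f : (M →₀ A) →ₗ[A] M, Function.Surjective f :=
      ⟨Finsupp.linearCombination A id, Finsupp.linearCombination_id_surjective A M⟩
    have hS := LinearMap.shortExact_shortComplexKer hf
    have hp : Projective f.shortComplexKer.X₂ := by
      rw [← IsProjective.iff_projective]; change Module.Projective A (M →₀ A); infer_instance
    have : HasProjectiveDimensionLE (ModuleCat.of A (LinearMap.ker f)) n :=
      (hS.hasProjectiveDimensionLT_X₃_iff n hp).mp h
    have hP : IsSMulRegular (M →₀ A) x := by
      intro a b hab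
      ext i
      exact hx (DFunLike.congr_fun hab i)
    have hK : IsSMulRegular (LinearMap.ker f) x := by
      intro a b hab
      exact Subtype.ext (hP (congrArg Subtype.val hab))
    have hpd := ih (LinearMap.ker f) hK
    exact pd_quot_step A x n _ _ M (LinearMap.ker f).subtype f Subtype.val_injective
      (LinearMap.exact_subtype_ker_map f) hf hM hpd

theorem pd_residue_quot {A : Type} [CommRing A] [IsLocalRing A] [IsNoetherianRing A] (x : A)
    (hx : IsSMulRegular A x) (hxm : x ∈ maximalIdeal A) (hxm2 : x ∉ maximalIdeal A ^ 2)
    [IsLocalRing (A ⧸ Ideal.span {x})] (n : ℕ)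
    [HasProjectiveDimensionLE (ModuleCat.of A (maximalIdeal A)) n] :
    HasProjectiveDimensionLE (ModuleCat.of (A ⧸ Ideal.span {x})
      (ResidueField (A ⧸ Ideal.span {x}))) n := by
  have hreg : IsSMulRegular (maximalIdeal A) x := fun a b hab ↦
    Subtype.ext (hx (congrArg Subtype.val hab))
  have := pd_quot x hx n (maximalIdeal A) hreg
  have hsurj : Function.Surjective (algebraMap A (A ⧸ Ideal.span {x})) :=
      Ideal.Quotient.mk_surjective
  have hloc : IsLocalHom (algebraMap A (A ⧸ Ideal.span {x})) := .of_surjective _ hsurj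
  have hx0 : algebraMap A (A ⧸ Ideal.span {x}) x = 0 :=
    Ideal.Quotient.eq_zero_iff_mem.mpr (Ideal.mem_span_singleton_self x)
  have hne : (maximalIdeal A).toCotangent ⟨x, hxm⟩ ≠ 0 := by
    rwa [Ne, Ideal.toCotangent_eq_zero]
  obtain ⟨φ, hφ⟩ := Module.Projective.exists_dual_eq_one (ResidueField A)
    (V := CotangentSpace A) hne
  let μ : ResidueField A →ₗ[A] ResidueField (A ⧸ Ideal.span {x}) :=
    { toFun := ResidueField.map (algebraMap A (A ⧸ Ideal.span {x}))
      map_add' := map_add _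
      map_smul' := fun a c ↦ by
        rw [Algebra.smul_def, map_mul, RingHom.id_apply, Algebra.smul_def]
        rfl }
  let ψ : maximalIdeal A →ₗ[A] ResidueField (A ⧸ Ideal.span {x}) :=
    μ ∘ₗ (φ.restrictScalars A) ∘ₗ (maximalIdeal A).toCotangent
  have hψ : ψ ⟨x, hxm⟩ = 1 := by
    change ResidueField.map (algebraMap A (A ⧸ Ideal.span {x})) (φ _) = 1
    rw [hφ, map_one]
  let π : QuotSMulTop x (maximalIdeal A) →ₗ[A] ResidueField (A ⧸ Ideal.span {x}) :=
    Submodule.liftQ _ ψ (by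
      intro y hy
      obtain ⟨z, -, rfl⟩ := Submodule.mem_smul_pointwise_iff_exists _ _ _ |>.mp hy
      rw [LinearMap.mem_ker, map_smul, ← algebraMap_smul (A ⧸ Ideal.span {x}) x, hx0, zero_smul])
  let ξ : QuotSMulTop x (maximalIdeal A) := Submodule.Quotient.mk ⟨x, hxm⟩
  let ι : ResidueField (A ⧸ Ideal.span {x}) →ₗ[A ⧸ Ideal.span {x}]
      QuotSMulTop x (maximalIdeal A) :=
    Submodule.liftQ (maximalIdeal (A ⧸ Ideal.span {x}))
     (LinearMap.toSpanSingleton (A ⧸ Ideal.span {x}) _ ξ) (by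
      intro b hb
      obtain ⟨a, rfl⟩ := hsurj b
      have ha : a ∈ maximalIdeal A := by
        intro hu
        exact hb (hu.map _)
      rw [LinearMap.mem_ker, LinearMap.toSpanSingleton_apply, algebraMap_smul]
      change Submodule.Quotient.mk (a • (⟨x, hxm⟩ : maximalIdeal A)) = (0 : QuotSMulTop x (maximalIdeal A))
      rw [Submodule.Quotient.mk_eq_zero]
      have : a • (⟨x, hxm⟩ : maximalIdeal A) = x • ⟨a, ha⟩ := Subtype.ext (mul_comm a x)
      rw [this]
      exact Submodule.smul_mem_pointwise_smul _ _ _ trivial)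
  have hπι : ∀ c, π (ι c) = c := by
    intro c
    obtain ⟨b, rfl⟩ := residue_surjective c
    obtain ⟨a, rfl⟩ := hsurj b
    change π ((algebraMap A (A ⧸ Ideal.span {x}) a) • ξ) = _
    rw [algebraMap_smul, map_smul]
    change a • ψ ⟨x, hxm⟩ = _
    rw [hψ, Algebra.smul_def, mul_one]
    rfl
  let r : Retract (ModuleCat.of (A ⧸ Ideal.span {x}) (ResidueField (A ⧸ Ideal.span {x})))
      (ModuleCat.of (A ⧸ Ideal.span {x}) (QuotSMulTop x (maximalIdeal A))) :=
    { i := ModuleCat.ofHom ι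
      r := ModuleCat.ofHom (π.extendScalarsOfSurjective hsurj)
      retract := by ext c; exact hπι c }
  exact r.hasProjectiveDimensionLT _

theorem exists_regular {A : Type} [CommRing A] [IsLocalRing A] [IsNoetherianRing A] (n : ℕ)
    [HasProjectiveDimensionLE (ModuleCat.of A (ResidueField A)) n] (hm : maximalIdeal A ≠ ⊥) :
    ∃ x ∈ maximalIdeal A, x ∉ maximalIdeal A ^ 2 ∧ IsSMulRegular A x := by
  by_contra! hcon
  have hsub : ((maximalIdeal A : Ideal A) : Set A) ⊆
      ⋃ i ∈ insert (maximalIdeal A ^ 2) (associatedPrimes A A), ((id i : Ideal A) : Set A) := by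
    intro x hx
    rw [Set.biUnion_insert]
    by_cases h2 : x ∈ maximalIdeal A ^ 2
    · exact Or.inl h2
    · right
      simp_rw [id, biUnion_associatedPrimes_eq_compl_nonZeroDivisors]
      intro hnz
      exact hcon x hx h2 (Module.Flat.isSMulRegular_of_nonZeroDivisors hnz)
  obtain ⟨P, hP, hle⟩ := ((maximalIdeal A).subset_union_prime_finite
    ((associatedPrimes.finite A A).insert _) (f := id) (maximalIdeal A ^ 2) (maximalIdeal A ^ 2)
    fun i hi h1 _ ↦ (hi.resolve_left h1).isPrime).1 hsub
  rcases hP with rfl | hP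
  · apply hm
    refine Submodule.eq_bot_of_le_smul_of_le_jacobson_bot (maximalIdeal A) _
      (maximalIdeal A).fg_of_isNoetherianRing ?_ (maximalIdeal_le_jacobson _)
    rwa [smul_eq_mul, ← pow_two]
  · rw [AssociatedPrimes.mem_iff, isAssociatedPrime_iff] at hP
    obtain ⟨prime, s, rfl⟩ := hP
    have hs : s ≠ 0 := by
      rintro rfl
      apply prime.ne_top
      simp
    have hfree := free_of_pd s hs (fun x hx ↦ by
      have := hle hx
      rw [id, Submodule.mem_colon_singleton] at this
      rw [mul_comm]; simpa using this) n (ResidueField A)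
    apply hm
    rw [eq_bot_iff, ← Module.annihilator_eq_bot.mpr (inferInstance : FaithfulSMul A (ResidueField A))]
    intro a ha
    rw [Module.mem_annihilator]
    intro c
    rw [Algebra.smul_def, ResidueField.algebraMap_eq, (residue_eq_zero_iff a).mpr ha, zero_mul]

theorem spanFinrank_quot {A : Type} [CommRing A] [IsLocalRing A] [IsNoetherianRing A] (x : A)
    (hxm : x ∈ maximalIdeal A) [IsLocalRing (A ⧸ Ideal.span {x})] :
    (maximalIdeal A).spanFinrank ≤ (maximalIdeal (A ⧸ Ideal.span {x})).spanFinrank + 1 := by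
  have hsurj : Function.Surjective (algebraMap A (A ⧸ Ideal.span {x})) :=
      Ideal.Quotient.mk_surjective
  have hloc : IsLocalHom (algebraMap A (A ⧸ Ideal.span {x})) := .of_surjective _ hsurj
  have fg := (maximalIdeal (A ⧸ Ideal.span {x})).fg_of_isNoetherianRing
  have fin := Submodule.FG.finite_generators fg
  let T := Set.image (Function.surjInv hsurj) (maximalIdeal (A ⧸ Ideal.span {x})).generators
  have hTf : T.Finite := fin.image _
  have himg : Set.image (algebraMap A (A ⧸ Ideal.span {x})) T =
      (maximalIdeal (A ⧸ Ideal.span {x})).generators := by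
    simp only [T, Set.image_image, Function.surjInv_eq hsurj, Set.image_id']
  have hmap : (Ideal.span T).map (algebraMap A (A ⧸ Ideal.span {x})) =
      maximalIdeal (A ⧸ Ideal.span {x}) := by
    rw [Ideal.map_span, himg]
    exact Submodule.span_generators _
  have hspan : maximalIdeal A = Ideal.span (insert x T) := by
    have hc := ((local_hom_TFAE (algebraMap A (A ⧸ Ideal.span {x}))).out 0 4).mp hloc
    rw [← hc, ← hmap,
      Ideal.comap_map_of_surjective _ hsurj, Ideal.span_insert, sup_comm]
    congr 1
    exact Ideal.mk_ker
  rw [hspan]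
  refine (Submodule.spanFinrank_span_le_ncard_of_finite (hTf.insert x)).trans ?_
  refine (Set.ncard_insert_le x T).trans ?_
  rw [← Submodule.FG.generators_ncard fg]
  exact Nat.add_le_add_right (Set.ncard_image_le fin) 1

theorem regular_of_pd (d : ℕ) : ∀ (A : Type) [CommRing A] [IsLocalRing A] [IsNoetherianRing A]
    (n : ℕ) [HasProjectiveDimensionLE (ModuleCat.of A (ResidueField A)) n],
    ringKrullDim A < d → IsRegularLocalRing A := by
  induction d with
  | zero =>
    intro A _ _ _ n _ h
    exact absurd h (not_lt.mpr (by simpa using ringKrullDim_nonneg_of_nontrivial (R := A)))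
  | succ d ih =>
    intro A _ _ _ n _ h
    by_cases hm : maximalIdeal A = ⊥
    · apply IsRegularLocalRing.of_spanFinrank_maximalIdeal_le
      rw [hm]
      simpa using ringKrullDim_nonneg_of_nontrivial (R := A)
    obtain ⟨x, hxm, hx2, hreg⟩ := exists_regular n hm
    have hsurj : Function.Surjective (residue A) := residue_surjective
    have hpdm : HasProjectiveDimensionLE (ModuleCat.of A (maximalIdeal A)) n := by
      let f : A →ₗ[A] ResidueField A := Algebra.linearMap A _
      have hS := LinearMap.shortExact_shortComplexKer (f := f) hsurj
      have hp : Projective f.shortComplexKer.X₂ := by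
        rw [← IsProjective.iff_projective]; change Module.Projective A A; infer_instance
      have h1 : HasProjectiveDimensionLT f.shortComplexKer.X₁ (n + 1) :=
        hS.hasProjectiveDimensionLT_X₁ (n + 1) (by rw [add_comm]; infer_instance)
          (show HasProjectiveDimensionLT (ModuleCat.of A (ResidueField A)) (n + 1 + 1) from
            hasProjectiveDimensionLT_of_ge _ (n + 1) (n + 1 + 1) (by omega))
      have hk : LinearMap.ker f = maximalIdeal A := by
        ext a
        exact residue_eq_zero_iff a
      have h2 : HasProjectiveDimensionLE (ModuleCat.of A (LinearMap.ker f)) n := h1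
      rwa [hk] at h2
    have : Nontrivial (A ⧸ Ideal.span {x}) := Ideal.Quotient.nontrivial_iff.mpr
      ((Ideal.span_singleton_le_iff_mem _ |>.mpr hxm).trans_lt
        (lt_top_iff_ne_top.mpr (maximalIdeal.isMaximal A).ne_top)).ne
    have hloc : IsLocalRing (A ⧸ Ideal.span {x}) :=
      IsLocalRing.of_surjective' (Ideal.Quotient.mk _) Ideal.Quotient.mk_surjective
    have := pd_residue_quot x hreg hxm hx2 n
    have hdim := ringKrullDim_quotient_span_singleton_succ_eq_ringKrullDim hreg hxm
    have hlt : ringKrullDim (A ⧸ Ideal.span {x}) < d := by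
      rw [← hdim] at h
      push_cast at h
      exact lt_of_add_lt_add_right h
    have hB := ih (A ⧸ Ideal.span {x}) n hlt
    apply IsRegularLocalRing.of_spanFinrank_maximalIdeal_le
    rw [← hdim, ← (isRegularLocalRing_iff _).mp hB]
    exact_mod_cast spanFinrank_quot x hxm

theorem regular_of_finite_globalDim
    (R : Type) [CommRing R] [IsNoetherianRing R] (h : ∃ n : ℕ, GlobalDimLE R n) :
    ∀ p : PrimeSpectrum R, IsRegularLocal (Localization.AtPrime p.asIdeal) := by
  intro p
  obtain ⟨n, hn⟩ := h
  have := pd_atPrime p.asIdeal n (fun M ↦ (hn M).hasPD)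
    (ResidueField (Localization.AtPrime p.asIdeal))
  have hnoeth : IsNoetherianRing (Localization.AtPrime p.asIdeal) :=
    IsLocalization.isNoetherianRing p.asIdeal.primeCompl _ inferInstance
  obtain ⟨d, hd⟩ : ∃ d : ℕ, ringKrullDim (Localization.AtPrime p.asIdeal) < d := by
    have h1 := ringKrullDim_lt_top (R := Localization.AtPrime p.asIdeal)
    have h2 := ringKrullDim_le_spanFinrank_maximalIdeal (Localization.AtPrime p.asIdeal)
    exact ⟨_ + 1, lt_of_le_of_lt h2 (by exact_mod_cast Nat.lt_succ_self _)⟩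
  exact (IsRegularLocalRing.iff_finrank_cotangentSpace _).mp (regular_of_pd d _ n hd)
end
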